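/- For every γ > 0, every s ∈ ℝ, and every sequence w : ℤ → ℂ with w₀ = 0, one has Σ_{k ∈ ℤ} ⟨k⟩^{2(s+2)} |w_k|² / (γ² + k⁶) ≤ 4 γ^{−2/3} Σ_{k ∈ ℤ} ⟨k⟩^{2s} |w_k|². Equivalently, the Fourier multiplier operator M₁ : w_k ↦ w_k/(γ − ik³) satisfies ‖M₁ w‖_{H^{s+2}} ≤ 2 γ^{−1/3} ‖w‖_{H^s} on mean-zero sequences. -/

import Mathlib

/-- The Japanese bracket `⟨x⟩ = (1 + x²)^{1/2}`. -/
noncomputable def jb (x : ℝ) : ℝ := Real.sqrt (1 + x^2)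

/-!
The estimate is pointwise in the frequency. Where `|x| ≥ 1` the bracket is comparable to `|x|`, so
`⟨x⟩⁴ ≤ 4x⁴`. The two terms of `γ² + x⁶` balance at `|x| = γ^{1/3}`; below this scale `γ²` controls
`x⁴ γ^{2/3}`, above it `x⁶` does.
-/

theorem pow_mul_pow_le_pow_add_add_pow_add {R : Type*} [Semiring R] [LinearOrder R]
    [IsOrderedRing R] {a b : R} (ha : 0 ≤ a) (hb : 0 ≤ b) (m n : ℕ) :
    a ^ m * b ^ n ≤ a ^ (m + n) + b ^ (m + n) := by
  rcases le_total a b with hab | hba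
  · calc a ^ m * b ^ n ≤ b ^ m * b ^ n := by gcongr
      _ = b ^ (m + n) := (pow_add b m n).symm
      _ ≤ a ^ (m + n) + b ^ (m + n) := le_add_of_nonneg_left (pow_nonneg ha _)
  · calc a ^ m * b ^ n ≤ a ^ m * a ^ n := by gcongr
      _ = a ^ (m + n) := (pow_add a m n).symm
      _ ≤ a ^ (m + n) + b ^ (m + n) := le_add_of_nonneg_right (pow_nonneg hb _)

theorem summable_and_tsum_le_mul_tsum_of_le {ι : Type*} {f g : ι → ℝ} {C : ℝ} (hf : ∀ i, 0 ≤ f i)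
    (hfg : ∀ i, f i ≤ C * g i) (hg : Summable g) :
    Summable f ∧ ∑' i, f i ≤ C * ∑' i, g i := by
  have hCg : Summable fun i => C * g i := hg.mul_left C
  have hfsum : Summable f := hCg.of_nonneg_of_le hf hfg
  exact ⟨hfsum, (hfsum.tsum_le_tsum hfg hCg).trans_eq tsum_mul_left⟩

theorem jb_pos (x : ℝ) : 0 < jb x := Real.sqrt_pos.mpr (by positivity)

theorem jb_sq (x : ℝ) : jb x ^ 2 = 1 + x ^ 2 := Real.sq_sqrt (by positivity)

theorem jb_rpow_two_mul_add_two (x s : ℝ) :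
    jb x ^ (2 * (s + 2)) = jb x ^ (2 * s) * jb x ^ 4 := by
  rw [← Real.rpow_add_natCast (jb_pos x).ne']
  congr 1
  push_cast
  ring

theorem jb_pow_four_le_four_mul_pow_four {x : ℝ} (hx : 1 ≤ |x|) : jb x ^ 4 ≤ 4 * x ^ 4 := by
  have hjb : jb x ^ 2 ≤ 2 * x ^ 2 := by
    linarith [jb_sq x, (one_le_sq_iff_one_le_abs x).mpr hx]
  calc jb x ^ 4 = (jb x ^ 2) ^ 2 := by ring
    _ ≤ (2 * x ^ 2) ^ 2 := by gcongr
    _ = 4 * x ^ 4 := by ring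

theorem pow_four_le_rpow_mul_sq_add_pow_six {γ : ℝ} (hγ : 0 < γ) (x : ℝ) :
    x ^ 4 ≤ γ ^ (-(2 : ℝ) / 3) * (γ ^ 2 + x ^ 6) := by
  have hcube : (γ ^ ((2 : ℝ) / 3)) ^ 3 = γ ^ 2 := by
    rw [← Real.rpow_mul_natCast hγ.le, ← Real.rpow_natCast γ 2]
    norm_num
  rw [neg_div, Real.rpow_neg hγ.le, le_inv_mul_iff₀' (by positivity)]
  calc x ^ 4 * γ ^ ((2 : ℝ) / 3) = (x ^ 2) ^ 2 * (γ ^ ((2 : ℝ) / 3)) ^ 1 := by ring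
    _ ≤ (x ^ 2) ^ 3 + (γ ^ ((2 : ℝ) / 3)) ^ 3 :=
      pow_mul_pow_le_pow_add_add_pow_add (sq_nonneg x) (Real.rpow_nonneg hγ.le _) 2 1
    _ = γ ^ 2 + x ^ 6 := by rw [hcube]; ring

theorem jb_pow_four_div_sq_add_pow_six_le {γ x : ℝ} (hγ : 0 < γ) (hx : 1 ≤ |x|) :
    jb x ^ 4 / (γ ^ 2 + x ^ 6) ≤ 4 * γ ^ (-(2 : ℝ) / 3) := by
  rw [div_le_iff₀ (by positivity)]
  linarith [jb_pow_four_le_four_mul_pow_four hx, pow_four_le_rpow_mul_sq_add_pow_six hγ x]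

theorem M1_gain_two_derivatives_general {ι E : Type*} [SeminormedAddGroup E] {γ : ℝ} (hγ : 0 < γ)
    (s : ℝ) (ξ : ι → ℝ) (w : ι → E) (hξ : ∀ i, w i ≠ 0 → 1 ≤ |ξ i|)
    (hw : Summable fun i => jb (ξ i) ^ (2 * s) * ‖w i‖ ^ 2) :
    Summable (fun i => jb (ξ i) ^ (2 * (s + 2)) * ‖w i‖ ^ 2 / (γ ^ 2 + ξ i ^ 6)) ∧
    ∑' i, jb (ξ i) ^ (2 * (s + 2)) * ‖w i‖ ^ 2 / (γ ^ 2 + ξ i ^ 6)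
      ≤ 4 * γ ^ (-(2 : ℝ) / 3) * ∑' i, jb (ξ i) ^ (2 * s) * ‖w i‖ ^ 2 := by
  have hjb_nonneg (i : ι) (t : ℝ) : 0 ≤ jb (ξ i) ^ t := Real.rpow_nonneg (jb_pos _).le t
  refine summable_and_tsum_le_mul_tsum_of_le (fun i => ?_) (fun i => ?_) hw
  · have hweight := hjb_nonneg i (2 * (s + 2))
    positivity
  · by_cases hwi : w i = 0
    · simp [hwi]
    have hweight := hjb_nonneg i (2 * s)
    calc jb (ξ i) ^ (2 * (s + 2)) * ‖w i‖ ^ 2 / (γ ^ 2 + ξ i ^ 6)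
        = jb (ξ i) ^ 4 / (γ ^ 2 + ξ i ^ 6) * (jb (ξ i) ^ (2 * s) * ‖w i‖ ^ 2) := by
          rw [jb_rpow_two_mul_add_two]; ring
      _ ≤ 4 * γ ^ (-(2 : ℝ) / 3) * (jb (ξ i) ^ (2 * s) * ‖w i‖ ^ 2) := by
          gcongr
          exact jb_pow_four_div_sq_add_pow_six_le hγ (hξ i hwi)

/-- For `γ > 0`, `s ∈ ℝ`, and any mean-zero sequence `w : ℤ → ℂ` (i.e. `w₀ = 0`),
`Σ_k ⟨k⟩^{2(s+2)} |w_k|²/(γ² + k⁶) ≤ 4 γ^{−2/3} Σ_k ⟨k⟩^{2s} |w_k|²`: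
the multiplier `M₁ : w_k ↦ w_k/(γ − ik³)` gains two derivatives with constant `2·γ^{−1/3}`. -/
theorem M1_gain_two_derivatives (γ s : ℝ) (hγ : 0 < γ) (w : ℤ → ℂ) (h0 : w 0 = 0)
    (hw : Summable (fun k : ℤ => jb (k : ℝ) ^ (2 * s) * ‖w k‖^2)) :
    Summable (fun k : ℤ => jb (k : ℝ) ^ (2 * (s + 2)) * ‖w k‖^2 / (γ^2 + (k : ℝ)^6)) ∧
    (∑' k : ℤ, jb (k : ℝ) ^ (2 * (s + 2)) * ‖w k‖^2 / (γ^2 + (k : ℝ)^6))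
      ≤ 4 * γ ^ (-(2 : ℝ)/3) * ∑' k : ℤ, jb (k : ℝ) ^ (2 * s) * ‖w k‖^2 := by
  refine M1_gain_two_derivatives_general hγ s (fun k : ℤ => (k : ℝ)) w (fun k hk => ?_) hw
  exact_mod_cast Int.one_le_abs (ne_of_apply_ne w (h0 ▸ hk))
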